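/- arXiv:1110.1798 — 2 statements merged into one kernel-verified Lean document; each statement's English description precedes it below -/
import Mathlib

section
/- Let n be a positive integer with n ≡ 0 (mod 4), let τ, A, A_C be integers, and set Q = ((-1)^{n/4}·B_{n/2} − B_{n/4})/(B_{n/2}·B_{n/4}) ∈ ℚ. If the equation A_C = 2n·(1 + 1/B_{n/2} + ((2^{n-1}−1)/(2^{n/2}−1)^2)·Q)·A + (1/(2^{n/2}−1)^2)·Q·(n·τ/2^n) holds in ℚ, then the rational number Q·(n·τ/2^n) is a 2-adic integer, i.e., its denominator in lowest terms is odd. -/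
/-- The topologists' Bernoulli number `B_k`: the absolute value of the `(2k)`-th
Bernoulli number, so `topB 1 = 1/6`, `topB 2 = 1/30`, etc. -/
def topB (k : ℕ) : ℚ := |bernoulli (2 * k)|

/-- The ring of rationals with odd denominator. -/
noncomputable def twoInt : ValuationSubring ℚ := (Rat.padicValuation 2).valuationSubring

lemma mem_twoInt_iff (x : ℚ) : x ∈ twoInt ↔ Odd x.den := by
  rw [twoInt, Valuation.mem_valuationSubring_iff, Rat.padicValuation_le_one_iff,
    ← even_iff_two_dvd, Nat.not_even_iff_odd]

lemma inv_odd_mem_twoInt (d : ℕ) (hd : Odd d) : (1 / (d : ℚ)) ∈ twoInt := by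
  rw [mem_twoInt_iff]
  have hd0 : d ≠ 0 := by rintro rfl; simp at hd
  rw [show ((1 : ℚ) / d).den = d by simp [hd0]]
  exact hd

lemma inv_bernoulli_mem (k : ℕ) (hk : 0 < k) : (bernoulli (2 * k))⁻¹ ∈ twoInt := by
  rcases twoInt.mem_or_inv_mem (bernoulli (2 * k)) with h | h
  · exfalso
    obtain ⟨z, hz⟩ := Bernoulli.vonStaudt_clausen k
    have h2 : 2 ∈ (Finset.range (2 * k + 2)).filter
        (fun p => p.Prime ∧ (p - 1) ∣ 2 * k) := by
      simp [Nat.prime_two]; omega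
    rw [← Finset.add_sum_erase _ _ h2] at hz
    have hs : ∑ p ∈ ((Finset.range (2 * k + 2)).filter
        (fun p => p.Prime ∧ (p - 1) ∣ 2 * k)).erase 2, (1 : ℚ) / p ∈ twoInt := by
      refine sum_mem fun p hp => inv_odd_mem_twoInt p ?_
      simp only [Finset.mem_erase, Finset.mem_filter] at hp
      exact hp.2.2.1.odd_of_ne_two hp.1
    have hzm : (z : ℚ) ∈ twoInt := intCast_mem twoInt z
    have hh : (1 : ℚ) / (2 : ℕ) ∈ twoInt := by
      have := sub_mem (sub_mem hzm h) hs
      rw [hz] at this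
      convert this using 1
      ring
    rw [mem_twoInt_iff] at hh
    norm_num at hh
  · exact h

lemma inv_topB_mem (k : ℕ) (hk : 0 < k) : (topB k)⁻¹ ∈ twoInt := by
  have h := inv_bernoulli_mem k hk
  rcases abs_choice (bernoulli (2 * k)) with hc | hc <;> rw [topB, hc]
  · exact h
  · rw [inv_neg]; exact neg_mem h

/-- Let `n ≡ 0 (mod 4)` be positive and `τ, A, A_C` integers.  Set
`Q = ((-1)^(n/4) B_{n/2} - B_{n/4}) / (B_{n/2} B_{n/4})`.  If
`A_C = 2n (1 + 1/B_{n/2} + ((2^(n-1)-1)/(2^(n/2)-1)^2) Q) A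
      + (1/(2^(n/2)-1)^2) Q (n τ / 2^n)`
holds in `ℚ`, then `Q * (n τ / 2^n)` is a 2-adic integer, i.e. its denominator in
lowest terms is odd. -/
theorem two_adic_integer_of_eq (n : ℕ) (hn : 0 < n) (h4 : n % 4 = 0)
    (τ A A_C : ℤ)
    (Q : ℚ)
    (hQ : Q = ((-1 : ℚ) ^ (n / 4) * topB (n / 2) - topB (n / 4)) /
      (topB (n / 2) * topB (n / 4)))
    (heq : (A_C : ℚ) =
      2 * n * (1 + 1 / topB (n / 2)
          + ((2 ^ (n - 1) - 1) / (2 ^ (n / 2) - 1) ^ 2) * Q) * A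
        + (1 / (2 ^ (n / 2) - 1) ^ 2) * Q * (n * τ / 2 ^ n)) :
    Odd (Q * (n * τ / 2 ^ n)).den := by
  rw [← mem_twoInt_iff]
  have ha := inv_topB_mem (n / 2) (by omega)
  have hb := inv_topB_mem (n / 4) (by omega)
  have hQm : Q ∈ twoInt := by
    have hQe : Q = ((-1 : ℚ) ^ (n / 4) * (topB (n / 2) * (topB (n / 2))⁻¹)) * (topB (n / 4))⁻¹
        - (topB (n / 4) * (topB (n / 4))⁻¹) * (topB (n / 2))⁻¹ := by
      rw [hQ, div_eq_mul_inv, mul_inv]; ring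
    have key : ∀ x : ℚ, x * x⁻¹ ∈ twoInt := by
      intro x
      by_cases hx : x = 0
      · simp [hx, zero_mem]
      · rw [mul_inv_cancel₀ hx]; exact one_mem _
    rw [hQe]
    exact sub_mem (mul_mem (mul_mem (pow_mem (neg_mem (one_mem _)) _) (key _)) hb)
      (mul_mem (key _) ha)
  have h2 : (2 : ℚ) ∈ twoInt := by exact_mod_cast natCast_mem twoInt 2
  have hnm : (n : ℚ) ∈ twoInt := natCast_mem twoInt n
  have hA : (A : ℚ) ∈ twoInt := intCast_mem twoInt A
  have hAC : (A_C : ℚ) ∈ twoInt := intCast_mem twoInt A_C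
  have hd : (2 : ℚ) ^ (n / 2) - 1 ∈ twoInt := sub_mem (pow_mem h2 _) (one_mem _)
  have hlt : 1 < 2 ^ (n / 2) := Nat.one_lt_two_pow (by omega)
  have hcast : ((2 ^ (n / 2) - 1 : ℕ) : ℚ) = (2 : ℚ) ^ (n / 2) - 1 := by
    rw [Nat.cast_sub hlt.le]; simp
  have hd0 : (2 : ℚ) ^ (n / 2) - 1 ≠ 0 := by
    rw [← hcast]; exact_mod_cast (Nat.sub_pos_of_lt hlt).ne'
  have hdi : 1 / ((2 : ℚ) ^ (n / 2) - 1) ∈ twoInt := by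
    rw [← hcast]
    refine inv_odd_mem_twoInt _ (Nat.Even.sub_odd hlt.le ?_ odd_one)
    exact (Nat.even_pow.2 ⟨even_two, by omega⟩)
  have hbr : 2 * n * (1 + 1 / topB (n / 2)
      + ((2 ^ (n - 1) - 1) / (2 ^ (n / 2) - 1) ^ 2) * Q) * A ∈ twoInt := by
    refine mul_mem (mul_mem (mul_mem h2 hnm) (add_mem (add_mem (one_mem _) ?_)
      (mul_mem ?_ hQm))) hA
    · rw [one_div]; exact ha
    · rw [div_eq_mul_one_div, ← one_div_pow]
      exact mul_mem (sub_mem (pow_mem h2 _) (one_mem _)) (pow_mem hdi _)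
  have hfin := mul_mem (pow_mem hd 2) (sub_mem hAC hbr)
  convert hfin using 1
  rw [heq, add_sub_cancel_left]
  generalize (2 : ℚ) ^ (n / 2) - 1 = d at hd0
  field_simp
end

section
/- Let n be a positive integer with n ≡ 4 (mod 8), let τ, A, A_C be integers, and set Q = (−B_{n/2} − B_{n/4})/(B_{n/2}·B_{n/4}) ∈ ℚ. If the equation A_C = 2n·(1 + 1/B_{n/2} + ((2^{n-1}−1)/(2^{n/2}−1)^2)·Q)·A + (1/(2^{n/2}−1)^2)·Q·(n·τ/2^n) holds in ℚ, then the rational number ((B_{n/2} + B_{n/4})/(B_{n/2}·B_{n/4}))·(τ/2^{n−2}) is a 2-adic integer, i.e., its denominator in lowest terms is odd. -/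
/-- `x` is a 2-adic integer: it is a fraction with odd denominator. -/
def TwoInt (x : ℚ) : Prop := ∃ z d : ℤ, Odd d ∧ x * d = z

lemma TwoInt.int (a : ℤ) : TwoInt (a : ℚ) := ⟨a, 1, odd_one, by simp⟩

lemma TwoInt.add {x y : ℚ} (hx : TwoInt x) (hy : TwoInt y) : TwoInt (x + y) := by
  obtain ⟨z, d, hd, h⟩ := hx
  obtain ⟨w, e, he, h'⟩ := hy
  refine ⟨z * e + w * d, d * e, hd.mul he, ?_⟩
  push_cast
  rw [← h, ← h']
  ring

lemma TwoInt.mul {x y : ℚ} (hx : TwoInt x) (hy : TwoInt y) : TwoInt (x * y) := by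
  obtain ⟨z, d, hd, h⟩ := hx
  obtain ⟨w, e, he, h'⟩ := hy
  refine ⟨z * w, d * e, hd.mul he, ?_⟩
  push_cast
  rw [← h, ← h']
  ring

lemma TwoInt.neg {x : ℚ} (hx : TwoInt x) : TwoInt (-x) := by
  simpa using (TwoInt.int (-1)).mul hx

lemma TwoInt.sub {x y : ℚ} (hx : TwoInt x) (hy : TwoInt y) : TwoInt (x - y) := by
  rw [sub_eq_add_neg]
  exact hx.add hy.neg

lemma TwoInt.inv_odd {a : ℤ} (ha : Odd a) : TwoInt (1 / (a : ℚ)) := by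
  refine ⟨1, a, ha, ?_⟩
  have : (a : ℚ) ≠ 0 := by
    rintro h
    rw [Int.cast_eq_zero] at h
    subst h
    simp at ha
  field_simp
  simp

lemma TwoInt.odd_den {x : ℚ} (hx : TwoInt x) : Odd x.den := by
  obtain ⟨z, d, hd, h⟩ := hx
  have h0 : (d : ℚ) ≠ 0 := by
    rintro h
    rw [Int.cast_eq_zero] at h
    subst h
    simp at hd
  have hx : x = (z : ℚ) / d := by field_simp; exact h
  have h1 : ((x.den : ℕ) : ℤ) ∣ d := by
    rw [hx, ← Rat.divInt_eq_div]
    exact Rat.den_dvd z d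
  have h2 : Odd ((x.den : ℕ) : ℤ) := by
    obtain ⟨c, hc⟩ := h1
    rw [hc] at hd
    exact (Int.odd_mul.mp hd).1
  exact_mod_cast h2

lemma TwoInt.sum {ι : Type} (s : Finset ι) (f : ι → ℚ) (h : ∀ i ∈ s, TwoInt (f i)) :
    TwoInt (∑ i ∈ s, f i) :=
  Finset.sum_induction f TwoInt (fun _ _ => TwoInt.add) (by simpa using TwoInt.int 0) h

lemma TwoInt.bernoulli_half (k : ℕ) (hk : 0 < k) : TwoInt (bernoulli (2 * k) + 1 / 2) := by
  obtain ⟨T, hT⟩ := Bernoulli.vonStaudt_clausen k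
  rw [← Finset.add_sum_erase _ _ (a := 2) (by
    simp [Nat.prime_two]; try omega)] at hT
  set R := ∑ x ∈ (Finset.filter (fun p => p.Prime ∧ (p - 1) ∣ 2 * k)
    (Finset.range (2 * k + 2))).erase 2, (1 : ℚ) / (x : ℚ) with hR
  have hRi : TwoInt R := by
    apply TwoInt.sum
    intro p hp
    simp only [Finset.mem_erase, Finset.mem_filter] at hp
    have := hp.2.2.1.odd_of_ne_two hp.1
    have h2 : Odd (p : ℤ) := by exact_mod_cast this
    simpa using TwoInt.inv_odd h2
  have : bernoulli (2 * k) + 1 / 2 = (T : ℚ) - R := by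
    rw [hT]
    push_cast
    ring
  rw [this]
  exact (TwoInt.int T).sub hRi

lemma TwoInt.inv_topB (k : ℕ) (hk : 0 < k) : topB k ≠ 0 ∧ TwoInt (1 / topB k) := by
  obtain ⟨z, d, hd, h⟩ := TwoInt.bernoulli_half k hk
  have h0 : (d : ℚ) ≠ 0 := by
    rintro h
    rw [Int.cast_eq_zero] at h
    subst h
    simp at hd
  have ho : Odd (2 * z - d) := by
    obtain ⟨e, rfl⟩ := hd
    exact ⟨z - e - 1, by ring⟩
  have h1 : ((2 * z - d : ℤ) : ℚ) ≠ 0 := by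
    rintro h
    rw [Int.cast_eq_zero] at h
    rw [h] at ho
    simp at ho
  have hb : bernoulli (2 * k) * (2 * d) = ((2 * z - d : ℤ) : ℚ) := by
    push_cast
    rw [← h]
    ring
  have hb0 : bernoulli (2 * k) ≠ 0 := by
    intro h2
    rw [h2, zero_mul] at hb
    exact h1 hb.symm
  have hi : TwoInt (1 / bernoulli (2 * k)) := by
    refine ⟨2 * d, 2 * z - d, ho, ?_⟩
    rw [← hb]
    field_simp
    push_cast
    ring
  unfold topB
  refine ⟨abs_ne_zero.mpr hb0, ?_⟩
  rcases abs_choice (bernoulli (2 * k)) with h | h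
  · rwa [h]
  · rw [h, one_div_neg_eq_neg_one_div]
    exact hi.neg

/-- Let `n ≡ 4 (mod 8)` be positive and `τ, A, A_C` integers.  Set
`Q = (-B_{n/2} - B_{n/4}) / (B_{n/2} B_{n/4})`.  If
`A_C = 2n (1 + 1/B_{n/2} + ((2^(n-1)-1)/(2^(n/2)-1)^2) Q) A
      + (1/(2^(n/2)-1)^2) Q (n τ / 2^n)`
holds in `ℚ`, then `((B_{n/2} + B_{n/4})/(B_{n/2} B_{n/4})) * (τ / 2^(n-2))` is a
2-adic integer, i.e. its denominator in lowest terms is odd. -/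
theorem two_adic_integer_of_eq_mod_eight (n : ℕ) (hn : 0 < n) (h8 : n % 8 = 4)
    (τ A A_C : ℤ)
    (Q : ℚ)
    (hQ : Q = (-topB (n / 2) - topB (n / 4)) / (topB (n / 2) * topB (n / 4)))
    (heq : (A_C : ℚ) =
      2 * n * (1 + 1 / topB (n / 2)
          + ((2 ^ (n - 1) - 1) / (2 ^ (n / 2) - 1) ^ 2) * Q) * A
        + (1 / (2 ^ (n / 2) - 1) ^ 2) * Q * (n * τ / 2 ^ n)) :
    Odd (((topB (n / 2) + topB (n / 4)) / (topB (n / 2) * topB (n / 4))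
      * (τ / 2 ^ (n - 2))).den) := by
  obtain ⟨hB0, hB⟩ := TwoInt.inv_topB (n / 2) (by omega)
  obtain ⟨hC0, hC⟩ := TwoInt.inv_topB (n / 4) (by omega)
  generalize topB (n / 2) = B at *
  generalize topB (n / 4) = C at *
  apply TwoInt.odd_den
  obtain ⟨j, hj⟩ : ∃ j, n = 8 * j + 4 := ⟨n / 8, by omega⟩
  have hS : (B + C) / (B * C) = 1 / B + 1 / C := by field_simp; ring
  have hQS : Q = -(1 / B + 1 / C) := by rw [hQ]; field_simp; ring
  have hSi := hB.add hC
  rw [hS]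
  generalize 1 / B + 1 / C = S at *
  subst hQS
  have hoz : Odd ((2 : ℤ) ^ (n / 2) - 1) := by
    apply Even.sub_odd _ odd_one
    exact (even_two).pow_of_ne_zero (by omega)
  have hu : Odd (((2 : ℤ) ^ (n / 2) - 1) ^ 2) := hoz.pow
  have hu0 : ((2 : ℚ) ^ (n / 2) - 1) ≠ 0 := by
    intro h
    have : ((2 : ℤ) ^ (n / 2) - 1) = 0 := by exact_mod_cast h
    rw [this] at hoz
    simp at hoz
  have hui := TwoInt.inv_odd hu
  have hm : Odd (2 * (j : ℤ) + 1) := ⟨j, rfl⟩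
  have hmi := TwoInt.inv_odd hm
  have hm0 : (2 * (j : ℚ) + 1) ≠ 0 := by positivity
  have hnQ : (n : ℚ) = 4 * (2 * j + 1) := by rw [hj]; push_cast; ring
  have h2n : (2 : ℚ) ^ n = 4 * 2 ^ (n - 2) := by
    rw [show (4 : ℚ) = 2 ^ 2 by norm_num, ← pow_add]
    congr 1
    omega
  have key : S * (τ / 2 ^ (n - 2)) =
      (1 / ((2 * (j : ℤ) + 1 : ℤ) : ℚ)) * (((((2 : ℤ) ^ (n / 2) - 1) ^ 2 : ℤ) : ℚ) *
        (((2 * n * A : ℤ) : ℚ) * (((1 : ℤ) : ℚ) + 1 / B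
          - (((2 : ℤ) ^ (n - 1) - 1 : ℤ) : ℚ) *
            (1 / ((((2 : ℤ) ^ (n / 2) - 1) ^ 2 : ℤ) : ℚ)) * S) - (A_C : ℚ))) := by
    push_cast
    rw [heq, h2n, hnQ]
    generalize (2 : ℚ) ^ (n / 2) - 1 = u at *
    generalize (2 : ℚ) ^ (n - 1) - 1 = v at *
    have hw : (2 : ℚ) ^ (n - 2) ≠ 0 := by positivity
    generalize (2 : ℚ) ^ (n - 2) = w at *
    field_simp
    ring
  rw [key]
  exact hmi.mul ((TwoInt.int _).mul (((TwoInt.int _).mul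
    (((TwoInt.int 1).add hB).sub (((TwoInt.int _).mul hui).mul hSi))).sub (TwoInt.int A_C)))
end
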